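/- (Lemma 1) Let σ_N > 0, σ_S > 0 and set ρ = σ_S²/σ_N². The differential entropy of the output, h_Y := −∫₀^∞ p_Y(y) · log p_Y(y) dy, where p_Y(y) = ∫₀^∞ p_{Y|X}(y|x) p_X(x) dx, is given in closed form by h_Y = log √(σ_S²) − log √(1 + ρ⁻¹) − ρ⁻¹ · log √(1 + ρ) + ρ + ψ(ρ⁻¹) − (3/2)·ψ(1) − log 2 + 1. -/

import Mathlib

open Real MeasureTheory Set Filter

/-- Modified Bessel function of the first kind of order one,
`I₁(z) = ∑_{k=0}^∞ (z/2)^(2k+1) / (k! (k+1)!)`. -/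
noncomputable def besselI1 (z : ℝ) : ℝ :=
  ∑' k : ℕ, (z / 2) ^ (2 * k + 1) / ((Nat.factorial k : ℝ) * (Nat.factorial (k + 1) : ℝ))

/-- Modified Bessel function of the second kind of order one,
`K₁(z) = ∫₀^∞ exp (−z cosh t) cosh t dt`. -/
noncomputable def besselK1 (z : ℝ) : ℝ :=
  ∫ t in Ioi (0 : ℝ), Real.exp (-z * Real.cosh t) * Real.cosh t

/-- Digamma function `ψ(x) = d/dx log Γ(x)`. -/
noncomputable def digamma (x : ℝ) : ℝ :=
  deriv (fun y : ℝ => Real.log (Real.Gamma y)) x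

/-- Conditional output density of the noncentral chi channel with four degrees of freedom. -/
noncomputable def condDensity (σN x y : ℝ) : ℝ :=
  (2 / σN ^ 2) * (y ^ 2 / x) * Real.exp (-(x ^ 2 + y ^ 2) / σN ^ 2) *
    besselI1 (2 * x * y / σN ^ 2)

/-- Rayleigh input density with mean-square `σS²`. -/
noncomputable def rayleighDensity (σS x : ℝ) : ℝ :=
  (2 * x / σS ^ 2) * Real.exp (-x ^ 2 / σS ^ 2)

/-- `F(ρ) = ∫₀^∞ ξ K₁(√(1+ρ⁻¹) ξ) I₁(ξ) log I₁(ξ) dξ`. -/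
noncomputable def Fint (ρ : ℝ) : ℝ :=
  ∫ ξ in Ioi (0 : ℝ),
    ξ * besselK1 (Real.sqrt (1 + ρ⁻¹) * ξ) * besselI1 ξ * Real.log (besselI1 ξ)

/-- Closed-form mutual information of Theorem 1. -/
noncomputable def Ixy (ρ : ℝ) : ℝ :=
  Real.log (ρ * Real.sqrt (1 + ρ⁻¹)) + ρ⁻¹ * Real.log (Real.sqrt (1 + ρ)) - ρ +
    ρ⁻¹ * Real.sqrt (1 + ρ⁻¹) * Fint ρ + digamma ρ⁻¹ - digamma 1 - 1

/-! The squared output is the sum of two independent exponential variables, with rates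
`c = 1 / (σN² + σS²)` and `a = 1 / σN²`: integrating the Bessel series term by term shows that its
density is `q t = c a / (a - c) * (exp (-c t) - exp (-a t))`. Factoring out `exp (-c t)`, the
entropy of `q` involves only the mean and `∫ q t * log (1 - exp (-(a - c) t))`, which the
substitution `u = exp (-(a - c) t)` turns into the derivative of a beta integral in its exponent,
so that `ψ` appears. Passing from `q` to the density `2 y q (y²)` of the output costs
`log 2 + (1/2) ∫ q t * log t`, and this logarithmic moment is likewise the derivative of a gamma
integral. -/

section LogMoment

variable {α : Type*} {m : MeasurableSpace α} {μ : Measure α} {w f : α → ℝ} {s : ℝ}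

lemma integrable_withDensity_ofReal_iff (hw : Measurable w) (hw₀ : 0 ≤ᵐ[μ] w) {g : α → ℝ} :
    Integrable g (μ.withDensity fun x => ENNReal.ofReal (w x)) ↔
      Integrable (fun x => w x * g x) μ := by
  rw [integrable_withDensity_iff_integrable_smul' hw.ennreal_ofReal (by simp)]
  refine integrable_congr (hw₀.mono fun x hx => ?_)
  simp only [ENNReal.toReal_ofReal hx, smul_eq_mul]

lemma integral_withDensity_ofReal (hw : Measurable w) (hw₀ : 0 ≤ᵐ[μ] w) (g : α → ℝ) :
    ∫ x, g x ∂(μ.withDensity fun x => ENNReal.ofReal (w x)) = ∫ x, w x * g x ∂μ := by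
  rw [integral_withDensity_eq_integral_toReal_smul hw.ennreal_ofReal (by simp)]
  refine integral_congr_ae (hw₀.mono fun x hx => ?_)
  simp only [ENNReal.toReal_ofReal hx, smul_eq_mul]

lemma mem_interior_integrableExpSet_log (hw : Measurable w) (hw₀ : 0 ≤ᵐ[μ] w)
    (hf : ∀ᵐ x ∂μ, 0 < f x) (h : ∀ᶠ r in nhds s, Integrable (fun x => w x * f x ^ r) μ) :
    s ∈ interior (ProbabilityTheory.integrableExpSet (fun x => Real.log (f x))
      (μ.withDensity fun x => ENNReal.ofReal (w x))) := by
  refine mem_interior_iff_mem_nhds.2 (h.mono fun r hr => ?_)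
  refine (integrable_withDensity_ofReal_iff hw hw₀).2 (hr.congr (hf.mono fun x hx => ?_))
  simp only [rpow_def_of_pos hx, mul_comm r]

-- Differentiation under the integral sign comes from the moment generating function of `log f`
-- under the measure with density `w`.
lemma integrable_mul_rpow_mul_log (hw : Measurable w) (hw₀ : 0 ≤ᵐ[μ] w)
    (hf : ∀ᵐ x ∂μ, 0 < f x) (h : ∀ᶠ r in nhds s, Integrable (fun x => w x * f x ^ r) μ) :
    Integrable (fun x => w x * (f x ^ s * Real.log (f x))) μ := by
  have hlog := ProbabilityTheory.integrable_pow_mul_exp_of_mem_interior_integrableExpSet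
    (mem_interior_integrableExpSet_log hw hw₀ hf h) 1
  refine ((integrable_withDensity_ofReal_iff hw hw₀).1 hlog).congr (hf.mono fun x hx => ?_)
  simp only [rpow_def_of_pos hx, pow_one, mul_comm s, mul_comm (Real.log (f x)) (Real.exp _)]

lemma hasDerivAt_integral_mul_rpow (hw : Measurable w) (hw₀ : 0 ≤ᵐ[μ] w)
    (hf : ∀ᵐ x ∂μ, 0 < f x) (h : ∀ᶠ r in nhds s, Integrable (fun x => w x * f x ^ r) μ) :
    HasDerivAt (fun r => ∫ x, w x * f x ^ r ∂μ) (∫ x, w x * (f x ^ s * Real.log (f x)) ∂μ) s := by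
  have hmgf := ProbabilityTheory.hasDerivAt_mgf (mem_interior_integrableExpSet_log hw hw₀ hf h)
  unfold ProbabilityTheory.mgf at hmgf
  simp only [integral_withDensity_ofReal hw hw₀] at hmgf
  convert! hmgf using 1
  · refine funext fun r => integral_congr_ae (hf.mono fun x hx => ?_)
    simp only [rpow_def_of_pos hx, mul_comm r]
  · refine integral_congr_ae (hf.mono fun x hx => ?_)
    simp only [rpow_def_of_pos hx, mul_comm s, mul_comm (Real.log (f x)) (Real.exp _)]

end LogMoment

section Digamma

lemma ne_neg_natCast_of_pos {x : ℝ} (hx : 0 < x) (m : ℕ) : x ≠ -m :=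
  ((neg_nonpos.2 m.cast_nonneg).trans_lt hx).ne'

lemma hasDerivAt_Gamma {x : ℝ} (hx : ∀ m : ℕ, x ≠ -m) :
    HasDerivAt Real.Gamma (digamma x * Real.Gamma x) x := by
  have hΓ := (Real.differentiableAt_Gamma hx).hasDerivAt
  have hψ : digamma x = deriv Real.Gamma x / Real.Gamma x :=
    (hΓ.log (Real.Gamma_ne_zero hx)).deriv
  rwa [hψ, div_mul_cancel₀ _ (Real.Gamma_ne_zero hx)]

lemma digamma_add_one {x : ℝ} (hx : ∀ m : ℕ, x ≠ -m) : digamma (x + 1) = digamma x + 1 / x := by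
  have hx₀ : x ≠ 0 := by simpa using hx 0
  have hx₁ : ∀ m : ℕ, x + 1 ≠ -m := fun m h => hx (m + 1) (by push_cast; linarith)
  have hshift : HasDerivAt (fun y : ℝ => Real.Gamma (y + 1))
      (digamma (x + 1) * Real.Gamma (x + 1)) x := (hasDerivAt_Gamma hx₁).comp_add_const x 1
  have hprod : HasDerivAt (fun y : ℝ => y * Real.Gamma y)
      (1 * Real.Gamma x + x * (digamma x * Real.Gamma x)) x :=
    (hasDerivAt_id x).mul (hasDerivAt_Gamma hx)
  have hderiv := hshift.unique (hprod.congr_of_eventuallyEq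
    ((eventually_ne_nhds hx₀).mono fun y hy => Real.Gamma_add_one hy))
  rw [Real.Gamma_add_one hx₀] at hderiv
  have hΓ := Real.Gamma_ne_zero hx
  field_simp
  apply mul_right_cancel₀ hΓ
  linarith

end Digamma

section ExponentialIntegrals

variable {c d s : ℝ}

lemma integral_exp_neg_mul_mul_rpow (hc : 0 < c) (hs : -1 < s) :
    ∫ t in Ioi (0 : ℝ), Real.exp (-(c * t)) * t ^ s = (1 / c) ^ (s + 1) * Real.Gamma (s + 1) := by
  simpa only [add_sub_cancel_right, mul_comm] using
    Real.integral_rpow_mul_exp_neg_mul_Ioi (neg_lt_iff_pos_add.1 hs) hc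

lemma integrableOn_exp_neg_mul_mul_rpow (hc : 0 < c) (hs : -1 < s) :
    IntegrableOn (fun t : ℝ => Real.exp (-(c * t)) * t ^ s) (Ioi 0) := by
  have hs' : 0 < s + 1 := neg_lt_iff_pos_add.1 hs
  exact .of_integral_ne_zero (by rw [integral_exp_neg_mul_mul_rpow hc hs]; positivity)

lemma integrableOn_exp_neg_mul_mul_rpow_mul_log (hc : 0 < c) (hs : -1 < s) :
    IntegrableOn (fun t : ℝ => Real.exp (-(c * t)) * (t ^ s * Real.log t)) (Ioi 0) :=
  integrable_mul_rpow_mul_log (by fun_prop) (.of_forall fun _ => (Real.exp_pos _).le)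
    (ae_restrict_mem measurableSet_Ioi)
    ((lt_mem_nhds hs).mono fun _ => integrableOn_exp_neg_mul_mul_rpow hc)

lemma integral_exp_neg_mul_mul_rpow_mul_log (hc : 0 < c) (hs : -1 < s) :
    ∫ t in Ioi (0 : ℝ), Real.exp (-(c * t)) * (t ^ s * Real.log t) =
      (1 / c) ^ (s + 1) * Real.Gamma (s + 1) * (digamma (s + 1) - Real.log c) := by
  have hderiv := hasDerivAt_integral_mul_rpow (μ := volume.restrict (Ioi 0))
    (w := fun t : ℝ => Real.exp (-(c * t))) (f := fun t => t) (by fun_prop)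
    (.of_forall fun _ => (Real.exp_pos _).le) (ae_restrict_mem measurableSet_Ioi)
    ((lt_mem_nhds hs).mono fun _ => integrableOn_exp_neg_mul_mul_rpow hc)
  have hΓ : HasDerivAt (fun r : ℝ => Real.Gamma (r + 1))
      (digamma (s + 1) * Real.Gamma (s + 1)) s :=
    (hasDerivAt_Gamma (ne_neg_natCast_of_pos (neg_lt_iff_pos_add.1 hs))).comp_add_const s 1
  have hpow := ((hasDerivAt_id s).add_const 1).const_rpow (one_div_pos.2 hc)
  rw [hderiv.unique ((hpow.mul hΓ).congr_of_eventuallyEq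
    ((lt_mem_nhds hs).mono fun r => integral_exp_neg_mul_mul_rpow hc)), one_div, Real.log_inv]
  simp only [id_eq]
  ring

lemma integrableOn_exp_neg_mul_mul_log (hc : 0 < c) :
    IntegrableOn (fun t : ℝ => Real.exp (-(c * t)) * Real.log t) (Ioi 0) := by
  simpa using integrableOn_exp_neg_mul_mul_rpow_mul_log hc neg_one_lt_zero

lemma integral_exp_neg_mul_mul_log (hc : 0 < c) :
    ∫ t in Ioi (0 : ℝ), Real.exp (-(c * t)) * Real.log t = (digamma 1 - Real.log c) / c := by
  simpa [div_eq_inv_mul] using integral_exp_neg_mul_mul_rpow_mul_log hc neg_one_lt_zero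

lemma integral_rpow_mul_one_sub_rpow {a b : ℝ} (ha : 0 < a) (hb : 0 < b) :
    ∫ u in Ioo (0 : ℝ) 1, u ^ (a - 1) * (1 - u) ^ (b - 1) = ProbabilityTheory.beta a b := by
  have hI : Complex.betaIntegral a b =
      ((∫ u in Ioo (0 : ℝ) 1, u ^ (a - 1) * (1 - u) ^ (b - 1) : ℝ) : ℂ) := by
    rw [Complex.betaIntegral, intervalIntegral.integral_of_le zero_le_one,
      integral_Ioc_eq_integral_Ioo, ← integral_complex_ofReal]
    refine setIntegral_congr_fun measurableSet_Ioo fun u hu => ?_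
    rw [Complex.ofReal_mul, Complex.ofReal_cpow hu.1.le,
      Complex.ofReal_cpow (sub_nonneg.2 hu.2.le)]
    push_cast
    rfl
  rw [ProbabilityTheory.beta_eq_betaIntegralReal a b ha hb, hI, Complex.ofReal_re]

lemma image_exp_neg_mul_Ioi (hd : 0 < d) :
    (fun t : ℝ => Real.exp (-(d * t))) '' Ioi 0 = Ioo 0 1 := by
  ext u
  simp only [mem_image, mem_Ioi, mem_Ioo]
  constructor
  · rintro ⟨t, ht, rfl⟩
    exact ⟨Real.exp_pos _, Real.exp_lt_one_iff.2 (neg_lt_zero.2 (mul_pos hd ht))⟩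
  · rintro ⟨hu₀, hu₁⟩
    refine ⟨-Real.log u / d, div_pos (neg_pos.2 (Real.log_neg hu₀ hu₁)) hd, ?_⟩
    rw [mul_div_cancel₀ _ hd.ne', neg_neg, Real.exp_log hu₀]

lemma integral_Ioo_eq_integral_comp_exp_neg_mul (hd : 0 < d) (g : ℝ → ℝ) :
    ∫ u in Ioo (0 : ℝ) 1, g u =
      ∫ t in Ioi (0 : ℝ), d * Real.exp (-(d * t)) * g (Real.exp (-(d * t))) := by
  have hderiv (t : ℝ) : HasDerivAt (fun t => Real.exp (-(d * t)))
      (-(d * Real.exp (-(d * t)))) t := by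
    have hlin : HasDerivAt (fun t => -(d * t)) (-(d * 1)) t :=
      ((hasDerivAt_id t).const_mul d).neg
    exact hlin.exp.congr_deriv (by ring)
  have hanti : AntitoneOn (fun t : ℝ => Real.exp (-(d * t))) (Ioi 0) := fun _ _ _ _ h =>
    Real.exp_le_exp.2 (neg_le_neg (mul_le_mul_of_nonneg_left h hd.le))
  rw [← image_exp_neg_mul_Ioi hd, integral_image_eq_integral_deriv_smul_of_antitoneOn
    measurableSet_Ioi (fun t _ => (hderiv t).hasDerivWithinAt) hanti]
  simp only [neg_neg, smul_eq_mul]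

lemma integral_exp_neg_mul_mul_one_sub_exp_rpow (hc : 0 < c) (hd : 0 < d) (hs : -1 < s) :
    ∫ t in Ioi (0 : ℝ), Real.exp (-(c * t)) * (1 - Real.exp (-(d * t))) ^ s =
      ProbabilityTheory.beta (c / d) (s + 1) / d := by
  rw [← integral_rpow_mul_one_sub_rpow (div_pos hc hd) (neg_lt_iff_pos_add.1 hs),
    integral_Ioo_eq_integral_comp_exp_neg_mul hd, eq_div_iff hd.ne', ← integral_mul_const]
  refine setIntegral_congr_fun measurableSet_Ioi fun t _ => ?_
  have hexp : Real.exp (-(c * t)) =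
      Real.exp (-(d * t)) * Real.exp (-(d * t)) ^ (c / d - 1) := by
    rw [← Real.exp_mul, ← Real.exp_add]
    congr 1
    field_simp
    ring
  simp only [hexp, add_sub_cancel_right]
  ring

lemma one_sub_exp_neg_mul_pos (hd : 0 < d) {t : ℝ} (ht : 0 < t) :
    0 < 1 - Real.exp (-(d * t)) :=
  sub_pos.2 (Real.exp_lt_one_iff.2 (neg_lt_zero.2 (mul_pos hd ht)))

lemma integrableOn_exp_neg_mul_mul_one_sub_exp_rpow (hc : 0 < c) (hd : 0 < d) (hs : -1 < s) :
    IntegrableOn (fun t : ℝ => Real.exp (-(c * t)) * (1 - Real.exp (-(d * t))) ^ s) (Ioi 0) := by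
  refine .of_integral_ne_zero ?_
  rw [integral_exp_neg_mul_mul_one_sub_exp_rpow hc hd hs]
  exact (div_pos (ProbabilityTheory.beta_pos (div_pos hc hd) (neg_lt_iff_pos_add.1 hs)) hd).ne'

lemma integrableOn_exp_neg_mul_mul_one_sub_exp_rpow_mul_log (hc : 0 < c) (hd : 0 < d)
    (hs : -1 < s) :
    IntegrableOn (fun t : ℝ => Real.exp (-(c * t)) *
      ((1 - Real.exp (-(d * t))) ^ s * Real.log (1 - Real.exp (-(d * t))))) (Ioi 0) :=
  integrable_mul_rpow_mul_log (by fun_prop) (.of_forall fun _ => (Real.exp_pos _).le)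
    (ae_restrict_of_forall_mem measurableSet_Ioi fun _ => one_sub_exp_neg_mul_pos hd)
    ((lt_mem_nhds hs).mono fun _ => integrableOn_exp_neg_mul_mul_one_sub_exp_rpow hc hd)

lemma hasDerivAt_beta_right {a b : ℝ} (ha : 0 < a) (hb : 0 < b) :
    HasDerivAt (ProbabilityTheory.beta a)
      (ProbabilityTheory.beta a b * (digamma b - digamma (a + b))) b := by
  have hab : 0 < a + b := add_pos ha hb
  have hnum := (hasDerivAt_Gamma (ne_neg_natCast_of_pos hb)).const_mul (Real.Gamma a)
  have hden : HasDerivAt (fun y => Real.Gamma (a + y))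
      (digamma (a + b) * Real.Gamma (a + b)) b :=
    (hasDerivAt_Gamma (ne_neg_natCast_of_pos hab)).comp_const_add a b
  have hΓ := (Real.Gamma_pos_of_pos hab).ne'
  refine (hnum.div hden hΓ).congr_deriv ?_
  rw [ProbabilityTheory.beta]
  field_simp

lemma beta_two_right {x : ℝ} (hx : 0 < x) :
    ProbabilityTheory.beta x 2 = 1 / (x * (x + 1)) := by
  have hΓ := (Real.Gamma_pos_of_pos hx).ne'
  have hx₁ : x + 1 ≠ 0 := by positivity
  rw [ProbabilityTheory.beta, ← one_add_one_eq_two, ← add_assoc, Real.Gamma_add_one hx₁,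
    Real.Gamma_add_one hx.ne', one_add_one_eq_two, Real.Gamma_two]
  field_simp

lemma integral_exp_neg_mul_mul_one_sub_exp_rpow_mul_log (hc : 0 < c) (hd : 0 < d) (hs : -1 < s) :
    ∫ t in Ioi (0 : ℝ), Real.exp (-(c * t)) *
        ((1 - Real.exp (-(d * t))) ^ s * Real.log (1 - Real.exp (-(d * t)))) =
      ProbabilityTheory.beta (c / d) (s + 1) / d *
        (digamma (s + 1) - digamma (c / d + (s + 1))) := by
  have hderiv := hasDerivAt_integral_mul_rpow (w := fun t : ℝ => Real.exp (-(c * t)))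
    (f := fun t => 1 - Real.exp (-(d * t))) (by fun_prop)
    (.of_forall fun _ => (Real.exp_pos _).le)
    (ae_restrict_of_forall_mem measurableSet_Ioi fun _ => one_sub_exp_neg_mul_pos hd)
    ((lt_mem_nhds hs).mono fun _ => integrableOn_exp_neg_mul_mul_one_sub_exp_rpow hc hd)
  have hbeta := ((hasDerivAt_beta_right (div_pos hc hd)
    (neg_lt_iff_pos_add.1 hs)).comp_add_const s 1).div_const d
  rw [hderiv.unique (hbeta.congr_of_eventuallyEq ((lt_mem_nhds hs).mono fun r =>
    integral_exp_neg_mul_mul_one_sub_exp_rpow hc hd))]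
  ring

end ExponentialIntegrals

/-- Differential entropy of a probability density `p` on `(0, ∞)`, in nats. -/
noncomputable def differentialEntropy (p : ℝ → ℝ) : ℝ :=
  -∫ x in Ioi (0 : ℝ), p x * Real.log (p x)

lemma differentialEntropy_congr {p q : ℝ → ℝ} (h : EqOn p q (Ioi 0)) :
    differentialEntropy p = differentialEntropy q :=
  congrArg Neg.neg (setIntegral_congr_fun measurableSet_Ioi fun x hx => by simp only [h hx])

-- If `q` is the density of `T`, the density on the left is that of `T ^ (1 / p)`.
lemma differentialEntropy_comp_rpow {q : ℝ → ℝ} {p : ℝ} (hp : p ≠ 0)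
    (hq : IntegrableOn q (Ioi 0))
    (hqt : IntegrableOn (fun t => q t * Real.log t) (Ioi 0))
    (hqq : IntegrableOn (fun t => q t * Real.log (q t)) (Ioi 0)) :
    differentialEntropy (fun y => |p| * y ^ (p - 1) * q (y ^ p)) =
      differentialEntropy q - Real.log |p| * (∫ t in Ioi (0 : ℝ), q t) -
        (1 - 1 / p) * ∫ t in Ioi (0 : ℝ), q t * Real.log t := by
  have hpt : EqOn
      (fun y => |p| * y ^ (p - 1) * q (y ^ p) * Real.log (|p| * y ^ (p - 1) * q (y ^ p)))
      (fun y => (|p| * y ^ (p - 1)) • (q (y ^ p) * Real.log (q (y ^ p)) +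
        Real.log |p| * q (y ^ p) + (1 - 1 / p) * (q (y ^ p) * Real.log (y ^ p)))) (Ioi 0) := by
    intro y (hy : 0 < y)
    by_cases hqy : q (y ^ p) = 0
    · simp [hqy]
    have hyp := (rpow_pos_of_pos hy (p - 1)).ne'
    simp only [smul_eq_mul]
    rw [Real.log_mul (mul_ne_zero (abs_ne_zero.2 hp) hyp) hqy,
      Real.log_mul (abs_ne_zero.2 hp) hyp, Real.log_rpow hy, Real.log_rpow hy]
    field_simp
    ring
  rw [differentialEntropy, setIntegral_congr_fun measurableSet_Ioi hpt,
    integral_comp_rpow_Ioi (fun t => q t * Real.log (q t) + Real.log |p| * q t +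
      (1 - 1 / p) * (q t * Real.log t)) hp,
    integral_add (hqq.fun_add (hq.const_mul _)) (hqt.const_mul _),
    integral_add hqq (hq.const_mul _), integral_const_mul, integral_const_mul,
    differentialEntropy]
  ring

/-- Density at `t > 0` of the hypoexponential distribution: the sum of two independent
exponential variables with distinct rates `c` and `a`. -/
noncomputable def hypoexpDensity (c a t : ℝ) : ℝ :=
  c * a / (a - c) * (Real.exp (-(c * t)) - Real.exp (-(a * t)))

namespace hypoexpDensity

variable {c a : ℝ}

lemma integrableOn_mul {g : ℝ → ℝ}
    (hc : IntegrableOn (fun t => Real.exp (-(c * t)) * g t) (Ioi 0))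
    (ha : IntegrableOn (fun t => Real.exp (-(a * t)) * g t) (Ioi 0)) :
    IntegrableOn (fun t => hypoexpDensity c a t * g t) (Ioi 0) := by
  simpa only [IntegrableOn, hypoexpDensity, mul_assoc, sub_mul] using
    (hc.fun_sub ha).const_mul (c * a / (a - c))

lemma integral_mul {g : ℝ → ℝ}
    (hc : IntegrableOn (fun t => Real.exp (-(c * t)) * g t) (Ioi 0))
    (ha : IntegrableOn (fun t => Real.exp (-(a * t)) * g t) (Ioi 0)) :
    ∫ t in Ioi (0 : ℝ), hypoexpDensity c a t * g t =
      c * a / (a - c) * ((∫ t in Ioi (0 : ℝ), Real.exp (-(c * t)) * g t) -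
        ∫ t in Ioi (0 : ℝ), Real.exp (-(a * t)) * g t) := by
  simp only [← integral_sub hc ha, ← integral_const_mul, hypoexpDensity, mul_assoc, sub_mul]

lemma integrableOn_mul_rpow (hc : 0 < c) (ha : 0 < a) {s : ℝ} (hs : -1 < s) :
    IntegrableOn (fun t => hypoexpDensity c a t * t ^ s) (Ioi 0) :=
  integrableOn_mul (integrableOn_exp_neg_mul_mul_rpow hc hs)
    (integrableOn_exp_neg_mul_mul_rpow ha hs)

lemma integral_mul_rpow (hc : 0 < c) (ha : 0 < a) {s : ℝ} (hs : -1 < s) :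
    ∫ t in Ioi (0 : ℝ), hypoexpDensity c a t * t ^ s =
      c * a / (a - c) * ((1 / c) ^ (s + 1) - (1 / a) ^ (s + 1)) * Real.Gamma (s + 1) := by
  rw [integral_mul (integrableOn_exp_neg_mul_mul_rpow hc hs)
    (integrableOn_exp_neg_mul_mul_rpow ha hs), integral_exp_neg_mul_mul_rpow hc hs,
    integral_exp_neg_mul_mul_rpow ha hs]
  ring

lemma integrableOn (hc : 0 < c) (ha : 0 < a) : IntegrableOn (hypoexpDensity c a) (Ioi 0) := by
  simpa using integrableOn_mul_rpow hc ha neg_one_lt_zero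

lemma integral_eq_one (hc : 0 < c) (ha : 0 < a) (hca : c ≠ a) :
    ∫ t in Ioi (0 : ℝ), hypoexpDensity c a t = 1 := by
  have hac : a - c ≠ 0 := sub_ne_zero.2 hca.symm
  have h := integral_mul_rpow hc ha neg_one_lt_zero
  simp only [rpow_zero, mul_one, zero_add, rpow_one, Real.Gamma_one] at h
  rw [h]
  field_simp

lemma integrableOn_mul_id (hc : 0 < c) (ha : 0 < a) :
    IntegrableOn (fun t => hypoexpDensity c a t * t) (Ioi 0) := by
  simpa using integrableOn_mul_rpow hc ha (s := 1) (by norm_num)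

lemma integral_mul_id (hc : 0 < c) (ha : 0 < a) (hca : c ≠ a) :
    ∫ t in Ioi (0 : ℝ), hypoexpDensity c a t * t = 1 / c + 1 / a := by
  have hac : a - c ≠ 0 := sub_ne_zero.2 hca.symm
  have h := integral_mul_rpow hc ha (s := 1) (by norm_num)
  simp only [rpow_one, one_add_one_eq_two, rpow_two, Real.Gamma_two, mul_one] at h
  rw [h]
  field_simp
  ring

lemma integrableOn_mul_log (hc : 0 < c) (ha : 0 < a) :
    IntegrableOn (fun t => hypoexpDensity c a t * Real.log t) (Ioi 0) :=
  integrableOn_mul (integrableOn_exp_neg_mul_mul_log hc) (integrableOn_exp_neg_mul_mul_log ha)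

lemma integral_mul_log (hc : 0 < c) (ha : 0 < a) (hca : c ≠ a) :
    ∫ t in Ioi (0 : ℝ), hypoexpDensity c a t * Real.log t =
      digamma 1 - Real.log c + c / (a - c) * Real.log (a / c) := by
  have hac : a - c ≠ 0 := sub_ne_zero.2 hca.symm
  rw [integral_mul (integrableOn_exp_neg_mul_mul_log hc) (integrableOn_exp_neg_mul_mul_log ha),
    integral_exp_neg_mul_mul_log hc, integral_exp_neg_mul_mul_log ha,
    Real.log_div ha.ne' hc.ne']
  field_simp
  ring

lemma eq_exp_mul_one_sub_exp (c a t : ℝ) :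
    hypoexpDensity c a t =
      c * a / (a - c) * (Real.exp (-(c * t)) * (1 - Real.exp (-((a - c) * t)))) := by
  have hexp : Real.exp (-(a * t)) = Real.exp (-(c * t)) * Real.exp (-((a - c) * t)) := by
    rw [← Real.exp_add]
    ring_nf
  rw [hypoexpDensity, hexp]
  ring

lemma integrableOn_mul_log_one_sub_exp (hc : 0 < c) (hca : c < a) :
    IntegrableOn (fun t => hypoexpDensity c a t * Real.log (1 - Real.exp (-((a - c) * t))))
      (Ioi 0) := by
  have h := integrableOn_exp_neg_mul_mul_one_sub_exp_rpow_mul_log hc (sub_pos.2 hca) (s := 1)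
    (by norm_num)
  simpa only [IntegrableOn, eq_exp_mul_one_sub_exp, rpow_one, mul_assoc] using
    h.const_mul (c * a / (a - c))

lemma integral_mul_log_one_sub_exp (hc : 0 < c) (hca : c < a) :
    ∫ t in Ioi (0 : ℝ), hypoexpDensity c a t * Real.log (1 - Real.exp (-((a - c) * t))) =
      digamma 2 - digamma (c / (a - c) + 2) := by
  have hac : 0 < a - c := sub_pos.2 hca
  have h := integral_exp_neg_mul_mul_one_sub_exp_rpow_mul_log hc hac (s := 1) (by norm_num)
  simp only [rpow_one, one_add_one_eq_two, beta_two_right (div_pos hc hac)] at h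
  simp only [eq_exp_mul_one_sub_exp, mul_assoc, integral_const_mul, h]
  have ha : c + (a - c) ≠ 0 := by rw [add_sub_cancel]; exact (hc.trans hca).ne'
  field_simp
  ring

lemma mul_log_self (hc : 0 < c) (hca : c < a) {t : ℝ} (ht : 0 < t) :
    hypoexpDensity c a t * Real.log (hypoexpDensity c a t) =
      Real.log (c * a / (a - c)) * hypoexpDensity c a t - c * (hypoexpDensity c a t * t) +
        hypoexpDensity c a t * Real.log (1 - Real.exp (-((a - c) * t))) := by
  have hac : 0 < a - c := sub_pos.2 hca
  have hK : c * a / (a - c) ≠ 0 := (div_pos (mul_pos hc (hc.trans hca)) hac).ne'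
  have hexp := (one_sub_exp_neg_mul_pos hac ht).ne'
  have hlog : Real.log (hypoexpDensity c a t) =
      Real.log (c * a / (a - c)) - c * t + Real.log (1 - Real.exp (-((a - c) * t))) := by
    rw [eq_exp_mul_one_sub_exp, Real.log_mul hK (mul_ne_zero (Real.exp_ne_zero _) hexp),
      Real.log_mul (Real.exp_ne_zero _) hexp, Real.log_exp]
    ring
  rw [hlog]
  ring

lemma integrableOn_mul_log_self (hc : 0 < c) (hca : c < a) :
    IntegrableOn (fun t => hypoexpDensity c a t * Real.log (hypoexpDensity c a t)) (Ioi 0) := by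
  have ha := hc.trans hca
  refine IntegrableOn.congr_fun ?_ (fun t ht => (mul_log_self hc hca ht).symm) measurableSet_Ioi
  exact (((integrableOn hc ha).const_mul _).sub ((integrableOn_mul_id hc ha).const_mul _)).add
    (integrableOn_mul_log_one_sub_exp hc hca)

lemma integral_mul_log_self (hc : 0 < c) (hca : c < a) :
    ∫ t in Ioi (0 : ℝ), hypoexpDensity c a t * Real.log (hypoexpDensity c a t) =
      Real.log (c * a / (a - c)) - c * (1 / c + 1 / a) +
        (digamma 2 - digamma (c / (a - c) + 2)) := by
  have ha := hc.trans hca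
  have i₁ := (integrableOn hc ha).const_mul (Real.log (c * a / (a - c)))
  have i₂ := (integrableOn_mul_id hc ha).const_mul c
  rw [setIntegral_congr_fun measurableSet_Ioi fun t ht => mul_log_self hc hca ht,
    integral_add (i₁.sub' i₂) (integrableOn_mul_log_one_sub_exp hc hca), integral_sub i₁ i₂,
    integral_const_mul, integral_const_mul, integral_eq_one hc ha hca.ne,
    integral_mul_id hc ha hca.ne, integral_mul_log_one_sub_exp hc hca, mul_one]

lemma differentialEntropy_eq (hc : 0 < c) (hca : c < a) :
    differentialEntropy (hypoexpDensity c a) =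
      a / c + digamma (c / (a - c)) - digamma 1 - Real.log (c * a / (a - c)) := by
  have ha := hc.trans hca
  have hac : 0 < a - c := sub_pos.2 hca
  have hr : 0 < c / (a - c) := div_pos hc hac
  have hr₁ : c / (a - c) + 1 = a / (a - c) := by field_simp; ring
  rw [differentialEntropy, integral_mul_log_self hc hca, ← one_add_one_eq_two, ← add_assoc,
    digamma_add_one (ne_neg_natCast_of_pos (add_pos hr one_pos)),
    digamma_add_one (ne_neg_natCast_of_pos hr), digamma_add_one (ne_neg_natCast_of_pos one_pos),
    hr₁]
  field_simp
  ring

end hypoexpDensity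

section OutputDensity

variable {m : ℝ}

lemma integral_pow_mul_exp_neg_mul_sq (hm : 0 < m) (k : ℕ) :
    ∫ x in Ioi (0 : ℝ), x ^ (2 * k + 1) * Real.exp (-(m * x ^ 2)) =
      (k.factorial : ℝ) / (2 * m ^ (k + 1)) := by
  have h := integral_rpow_mul_exp_neg_mul_rpow (p := 2) (q := ((2 * k + 1 : ℕ) : ℝ)) (b := m)
    two_pos (neg_one_lt_zero.trans_le (Nat.cast_nonneg _)) hm
  have hexp : (((2 * k + 1 : ℕ) : ℝ) + 1) / 2 = (k : ℝ) + 1 := by push_cast; ring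
  have hneg : -(((2 * k + 1 : ℕ) : ℝ) + 1) / 2 = -((k + 1 : ℕ) : ℝ) := by push_cast; ring
  simp only [rpow_natCast, rpow_ofNat, neg_mul] at h
  rw [h, hexp, hneg, Real.Gamma_nat_eq_factorial, rpow_neg hm.le, rpow_natCast]
  field_simp

lemma integrableOn_pow_mul_exp_neg_mul_sq (hm : 0 < m) (k : ℕ) :
    IntegrableOn (fun x : ℝ => x ^ (2 * k + 1) * Real.exp (-(m * x ^ 2))) (Ioi 0) :=
  .of_integral_ne_zero (by rw [integral_pow_mul_exp_neg_mul_sq hm]; positivity)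

lemma hasSum_pow_succ_div_factorial_succ (x : ℝ) :
    HasSum (fun k : ℕ => x ^ (k + 1) / ((k + 1).factorial : ℝ)) (Real.exp x - 1) := by
  have h := NormedSpace.expSeries_div_hasSum_exp x
  rw [← Real.exp_eq_exp_ℝ] at h
  simpa using (hasSum_nat_add_iff' 1).2 h

lemma integral_besselI1_term (hm : 0 < m) (z : ℝ) (k : ℕ) :
    ∫ x in Ioi (0 : ℝ), z ^ (2 * k + 2) / ((k.factorial : ℝ) * ((k + 1).factorial : ℝ)) *
        (x ^ (2 * k + 1) * Real.exp (-(m * x ^ 2))) =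
      (z ^ 2 / m) ^ (k + 1) / ((k + 1).factorial : ℝ) / 2 := by
  have hk : (k.factorial : ℝ) ≠ 0 := Nat.cast_ne_zero.2 k.factorial_ne_zero
  have hk' : ((k + 1).factorial : ℝ) ≠ 0 := Nat.cast_ne_zero.2 (k + 1).factorial_ne_zero
  rw [integral_const_mul, integral_pow_mul_exp_neg_mul_sq hm, div_pow]
  field_simp
  ring

-- The factor `z` makes every term of the series nonnegative, so termwise integration applies.
lemma integral_exp_neg_mul_sq_mul_besselI1 (hm : 0 < m) (z : ℝ) :
    ∫ x in Ioi (0 : ℝ), Real.exp (-(m * x ^ 2)) * (z * besselI1 (2 * z * x)) =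
      (Real.exp (z ^ 2 / m) - 1) / 2 := by
  let F : ℕ → ℝ → ℝ := fun k x => z ^ (2 * k + 2) /
    ((k.factorial : ℝ) * ((k + 1).factorial : ℝ)) * (x ^ (2 * k + 1) * Real.exp (-(m * x ^ 2)))
  have hsum : HasSum (fun k => ∫ x in Ioi (0 : ℝ), F k x) ((Real.exp (z ^ 2 / m) - 1) / 2) := by
    simpa only [F, integral_besselI1_term hm] using
      (hasSum_pow_succ_div_factorial_succ (z ^ 2 / m)).div_const 2
  have hnorm (k : ℕ) : ∫ x in Ioi (0 : ℝ), ‖F k x‖ = ∫ x in Ioi (0 : ℝ), F k x := by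
    refine setIntegral_congr_fun measurableSet_Ioi fun x (hx : 0 < x) => Real.norm_of_nonneg ?_
    have hz : 0 ≤ z ^ (2 * k + 2) := (even_two_mul (k + 1)).pow_nonneg z
    positivity
  have hswap := hasSum_integral_of_summable_integral_norm (μ := volume.restrict (Ioi 0)) (F := F)
    (fun k => (integrableOn_pow_mul_exp_neg_mul_sq hm k).const_mul _)
    (by simpa only [hnorm] using hsum.summable)
  rw [hsum.unique hswap]
  refine setIntegral_congr_fun measurableSet_Ioi fun x _ => ?_
  simp only [besselI1, F]
  rw [← tsum_mul_left, ← tsum_mul_left]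
  refine tsum_congr fun k => ?_
  rw [show 2 * z * x / 2 = z * x by ring, mul_pow]
  ring

variable {σN σS : ℝ}

lemma condDensity_mul_rayleighDensity {x : ℝ} (hx : x ≠ 0) (y : ℝ) :
    condDensity σN x y * rayleighDensity σS x =
      4 * y / σS ^ 2 * Real.exp (-(y ^ 2 / σN ^ 2)) *
        (Real.exp (-((1 / σN ^ 2 + 1 / σS ^ 2) * x ^ 2)) *
          (y / σN ^ 2 * besselI1 (2 * (y / σN ^ 2) * x))) := by
  have hexp : Real.exp (-(x ^ 2 + y ^ 2) / σN ^ 2) * Real.exp (-x ^ 2 / σS ^ 2) =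
      Real.exp (-(y ^ 2 / σN ^ 2)) * Real.exp (-((1 / σN ^ 2 + 1 / σS ^ 2) * x ^ 2)) := by
    rw [← Real.exp_add, ← Real.exp_add]
    ring_nf
  have harg : 2 * x * y / σN ^ 2 = 2 * (y / σN ^ 2) * x := by ring
  rw [condDensity, rayleighDensity, harg]
  calc _ = 4 * y / σS ^ 2 * (y / σN ^ 2) * besselI1 (2 * (y / σN ^ 2) * x) *
        (Real.exp (-(x ^ 2 + y ^ 2) / σN ^ 2) * Real.exp (-x ^ 2 / σS ^ 2)) := by
        field_simp
        ring
    _ = _ := by rw [hexp]; ring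

-- The squared output is the sum of independent exponentials of means `σN² + σS²` and `σN²`.
lemma integral_condDensity_mul_rayleighDensity (hσN : σN ≠ 0) (hσS : σS ≠ 0) (y : ℝ) :
    ∫ x in Ioi (0 : ℝ), condDensity σN x y * rayleighDensity σS x =
      2 * y * hypoexpDensity (1 / (σN ^ 2 + σS ^ 2)) (1 / σN ^ 2) (y ^ 2) := by
  have hm : 0 < 1 / σN ^ 2 + 1 / σS ^ 2 := by positivity
  have hS : σN ^ 2 + σS ^ 2 ≠ 0 := by positivity
  have hK : 1 / (σN ^ 2 + σS ^ 2) * (1 / σN ^ 2) / (1 / σN ^ 2 - 1 / (σN ^ 2 + σS ^ 2)) =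
      1 / σS ^ 2 := by
    field_simp
    ring
  have hexp : Real.exp (-(1 / (σN ^ 2 + σS ^ 2) * y ^ 2)) =
      Real.exp (-(y ^ 2 / σN ^ 2)) *
        Real.exp ((y / σN ^ 2) ^ 2 / (1 / σN ^ 2 + 1 / σS ^ 2)) := by
    rw [← Real.exp_add]
    congr 1
    field_simp
    ring
  rw [setIntegral_congr_fun measurableSet_Ioi
      fun x (hx : 0 < x) => condDensity_mul_rayleighDensity hx.ne' y,
    integral_const_mul, integral_exp_neg_mul_sq_mul_besselI1 hm, hypoexpDensity, hK, hexp]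
  ring_nf

end OutputDensity

lemma differentialEntropy_sqrt_hypoexp {c a : ℝ} (hc : 0 < c) (hca : c < a) :
    differentialEntropy (fun y => 2 * y * hypoexpDensity c a (y ^ 2)) =
      a / c + digamma (c / (a - c)) - (3 / 2) * digamma 1 - Real.log (c * a / (a - c)) -
        Real.log 2 + (1 / 2) * (Real.log c - c / (a - c) * Real.log (a / c)) := by
  have ha := hc.trans hca
  have h := differentialEntropy_comp_rpow two_ne_zero (hypoexpDensity.integrableOn hc ha)
    (hypoexpDensity.integrableOn_mul_log hc ha) (hypoexpDensity.integrableOn_mul_log_self hc hca)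
  have htwo : (2 : ℝ) - 1 = 1 := by norm_num
  simp only [abs_two, htwo, rpow_one, rpow_two] at h
  rw [h, hypoexpDensity.differentialEntropy_eq hc hca,
    hypoexpDensity.integral_eq_one hc ha hca.ne, hypoexpDensity.integral_mul_log hc ha hca.ne]
  ring

/-- Lemma 1: closed form for the output differential entropy
h_Y = −∫₀^∞ p_Y log p_Y with Rayleigh input. -/
theorem stmt_3 (σN σS ρ : ℝ) (hσN : 0 < σN) (hσS : 0 < σS) (hρ : ρ = σS ^ 2 / σN ^ 2)
    (pY : ℝ → ℝ)
    (hpY : ∀ y : ℝ, pY y = ∫ x in Ioi (0 : ℝ), condDensity σN x y * rayleighDensity σS x) :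
    -∫ y in Ioi (0 : ℝ), pY y * Real.log (pY y) =
      Real.log (Real.sqrt (σS ^ 2)) - Real.log (Real.sqrt (1 + ρ⁻¹)) -
        ρ⁻¹ * Real.log (Real.sqrt (1 + ρ)) + ρ + digamma ρ⁻¹ - (3 / 2) * digamma 1 -
        Real.log 2 + 1 := by
  obtain ⟨hN, hS⟩ : 0 < σN ^ 2 ∧ 0 < σS ^ 2 := ⟨by positivity, by positivity⟩
  set c := 1 / (σN ^ 2 + σS ^ 2) with hc
  set a := 1 / σN ^ 2 with ha
  have hc₀ : 0 < c := by positivity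
  have hca : c < a := one_div_lt_one_div_of_lt hN (lt_add_of_pos_right _ hS)
  have hratio : a / c = 1 + ρ := by rw [hρ, hc, ha]; field_simp
  have hinv : c / (a - c) = ρ⁻¹ := by rw [hρ, hc, ha]; field_simp; ring
  have hK : c * a / (a - c) = (σS ^ 2)⁻¹ := by rw [hc, ha]; field_simp; ring
  have hlogc : Real.log c = -(Real.log (σS ^ 2) + Real.log (1 + ρ⁻¹)) := by
    rw [← Real.log_mul hS.ne' (by rw [hρ]; positivity), ← Real.log_inv, hc, hρ]
    congr 1
    field_simp
    ring
  change differentialEntropy pY = _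
  rw [differentialEntropy_congr fun y _ => (hpY y).trans
      (integral_condDensity_mul_rayleighDensity hσN.ne' hσS.ne' y),
    differentialEntropy_sqrt_hypoexp hc₀ hca, hratio, hinv, hK, hlogc, Real.log_inv,
    Real.log_sqrt hS.le, Real.log_sqrt (by rw [hρ]; positivity),
    Real.log_sqrt (by rw [hρ]; positivity)]
  ring
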